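/- arXiv:1511.08463 — 4 statements merged into one kernel-verified Lean document; each statement's English description precedes it below -/
import Mathlib

section
/- The squared Fischer–Burmeister function is continuously differentiable on all of ℝ²: the map (a,b) ↦ (√(a² + b²) − a − b)² is C¹ as a function ℝ × ℝ → ℝ (in particular it is differentiable at the origin, where the Fischer–Burmeister function itself is not differentiable is not required—only C¹ regularity of the square is asserted). -/
lemma fb_cont_aux (f : ℝ × ℝ → ℝ) (hf : Continuous f)
    (hb : ∀ p : ℝ × ℝ, |f p| ≤ Real.sqrt (p.1 ^ 2 + p.2 ^ 2)) :
    Continuous (fun p : ℝ × ℝ => (p.1 + p.2) * (f p / Real.sqrt (p.1 ^ 2 + p.2 ^ 2))) := by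
  rw [continuous_iff_continuousAt]
  intro p
  by_cases hp : Real.sqrt (p.1 ^ 2 + p.2 ^ 2) = 0
  · have h0 : p.1 + p.2 = 0 := by
      rw [Real.sqrt_eq_zero (by positivity)] at hp
      have h1 : p.1 = 0 := by nlinarith [sq_nonneg p.1, sq_nonneg p.2]
      have h2 : p.2 = 0 := by nlinarith [sq_nonneg p.1, sq_nonneg p.2]
      simp [h1, h2]
    unfold ContinuousAt
    simp only [h0, zero_mul]
    have hg : Filter.Tendsto (fun q : ℝ × ℝ => |q.1 + q.2|) (nhds p) (nhds 0) := by
      have : Continuous (fun q : ℝ × ℝ => |q.1 + q.2|) := by fun_prop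
      have h := this.tendsto p
      simpa [h0] using h
    refine squeeze_zero_norm (fun q => ?_) hg
    rw [Real.norm_eq_abs, abs_mul, abs_div, abs_of_nonneg (Real.sqrt_nonneg _)]
    exact mul_le_of_le_one_right (abs_nonneg _)
      (div_le_one_of_le₀ (hb q) (Real.sqrt_nonneg _))
  · have : ContinuousAt (fun p : ℝ × ℝ => Real.sqrt (p.1 ^ 2 + p.2 ^ 2)) p := by fun_prop
    exact (by fun_prop : ContinuousAt (fun p : ℝ × ℝ => p.1 + p.2) p).mul
      (hf.continuousAt.div this hp)

lemma fb_contDiff_aux :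
    ContDiff ℝ 1 (fun p : ℝ × ℝ => (p.1 + p.2) * Real.sqrt (p.1 ^ 2 + p.2 ^ 2)) := by
  rw [contDiff_one_iff_hasFDerivAt]
  refine ⟨fun p => ((p.1 + p.2) * (p.1 / Real.sqrt (p.1 ^ 2 + p.2 ^ 2))
      + Real.sqrt (p.1 ^ 2 + p.2 ^ 2)) • ContinuousLinearMap.fst ℝ ℝ ℝ
      + ((p.1 + p.2) * (p.2 / Real.sqrt (p.1 ^ 2 + p.2 ^ 2))
      + Real.sqrt (p.1 ^ 2 + p.2 ^ 2)) • ContinuousLinearMap.snd ℝ ℝ ℝ, ?_, ?_⟩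
  · have h1 := fb_cont_aux (fun p => p.1) continuous_fst
      (fun p => Real.abs_le_sqrt (by nlinarith [sq_nonneg p.2]))
    have h2 := fb_cont_aux (fun p => p.2) continuous_snd
      (fun p => Real.abs_le_sqrt (by nlinarith [sq_nonneg p.1]))
    have h3 : Continuous (fun p : ℝ × ℝ => Real.sqrt (p.1 ^ 2 + p.2 ^ 2)) := by fun_prop
    exact ((h1.add h3).smul continuous_const).add ((h2.add h3).smul continuous_const)
  · intro p
    by_cases hp : p = 0
    · subst hp
      have : HasFDerivAt (fun p : ℝ × ℝ => (p.1 + p.2) * Real.sqrt (p.1 ^ 2 + p.2 ^ 2))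
          (0 : ℝ × ℝ →L[ℝ] ℝ) 0 := by
        refine Asymptotics.IsBigO.hasFDerivAt (n := 2) ?_ (by norm_num)
        refine Asymptotics.IsBigO.of_bound 4 (Filter.Eventually.of_forall fun q => ?_)
        have a1 : |q.1| ≤ ‖q‖ := norm_fst_le q
        have a2 : |q.2| ≤ ‖q‖ := norm_snd_le q
        have hs : |q.1 + q.2| ≤ 2 * ‖q‖ := (abs_add_le _ _).trans (by linarith)
        have hr : Real.sqrt (q.1 ^ 2 + q.2 ^ 2) ≤ 2 * ‖q‖ := by
          apply Real.sqrt_le_iff.2 ⟨by positivity, ?_⟩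
          have b1 := sq_le_sq' (by linarith [abs_nonneg q.1, norm_nonneg q]) a1
          have b2 := sq_le_sq' (by linarith [abs_nonneg q.2, norm_nonneg q]) a2
          rw [sq_abs] at b1 b2
          nlinarith [sq_nonneg ‖q‖]
        rw [sub_zero, Real.norm_eq_abs, abs_mul, abs_of_nonneg (Real.sqrt_nonneg _), norm_pow,
          norm_norm]
        calc _ ≤ (2 * ‖q‖) * (2 * ‖q‖) := by gcongr
          _ = _ := by ring
      simpa using this
    · have hne : p.1 ^ 2 + p.2 ^ 2 ≠ 0 := by
        intro h
        apply hp
        ext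
        · simp; nlinarith [sq_nonneg p.1, sq_nonneg p.2]
        · simp; nlinarith [sq_nonneg p.1, sq_nonneg p.2]
      have f1 : HasFDerivAt (fun p : ℝ × ℝ => p.1) (ContinuousLinearMap.fst ℝ ℝ ℝ) p :=
        hasFDerivAt_fst
      have f2 : HasFDerivAt (fun p : ℝ × ℝ => p.2) (ContinuousLinearMap.snd ℝ ℝ ℝ) p :=
        hasFDerivAt_snd
      have hr := ((f1.pow 2).add (f2.pow 2)).sqrt hne
      refine ((f1.add f2).mul hr).congr_fderiv ?_
      have hs : Real.sqrt (p.1 ^ 2 + p.2 ^ 2) ≠ 0 := by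
        rw [Real.sqrt_ne_zero (by positivity)]; exact hne
      ext <;> simp <;> left <;> field_simp

/-- The squared Fischer–Burmeister function `(a,b) ↦ (√(a² + b²) − a − b)²` is
continuously differentiable on all of `ℝ²`. -/
theorem contDiff_one_sq_fischerBurmeister :
    ContDiff ℝ 1 (fun p : ℝ × ℝ => (Real.sqrt (p.1 ^ 2 + p.2 ^ 2) - p.1 - p.2) ^ 2) := by
  have h : (fun p : ℝ × ℝ => (Real.sqrt (p.1 ^ 2 + p.2 ^ 2) - p.1 - p.2) ^ 2) =
      fun p : ℝ × ℝ => (p.1 ^ 2 + p.2 ^ 2 + (p.1 + p.2) ^ 2)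
        - 2 * ((p.1 + p.2) * Real.sqrt (p.1 ^ 2 + p.2 ^ 2)) := by
    funext p
    have := Real.sq_sqrt (show 0 ≤ p.1 ^ 2 + p.2 ^ 2 by positivity)
    linear_combination this
  rw [h]
  have h1 : ContDiff ℝ 1 (fun p : ℝ × ℝ => p.1 ^ 2 + p.2 ^ 2 + (p.1 + p.2) ^ 2) := by fun_prop
  exact h1.sub (contDiff_const.mul fb_contDiff_aux)
end

section
/- Let n ≥ 1, let D, L, U be n×n complex matrices with D diagonal and every diagonal entry of D nonzero, L strictly lower triangular, and U strictly upper triangular, and let ω be a nonzero real number. Then D − ωL is invertible and the SOR iteration matrix M_ω = (D − ωL)⁻¹(ωU + (1−ω)D) satisfies det M_ω = (1−ω)ⁿ. -/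
open Matrix

/-- Determinant of the SOR iteration matrix: with `D` diagonal with nonzero diagonal
entries, `L` strictly lower triangular, `U` strictly upper triangular and `ω ≠ 0`,
the matrix `D − ωL` is invertible and
`det ((D − ωL)⁻¹ (ωU + (1−ω)D)) = (1−ω)ⁿ`. -/
theorem sor_iteration_matrix_det (n : ℕ) (hn : 1 ≤ n)
    (D L U : Matrix (Fin n) (Fin n) ℂ)
    (hD : D.IsDiag) (hDdiag : ∀ i, D i i ≠ 0)
    (hL : ∀ i j : Fin n, i ≤ j → L i j = 0)
    (hU : ∀ i j : Fin n, j ≤ i → U i j = 0)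
    (ω : ℝ) (hω : ω ≠ 0) :
    IsUnit (D - (ω : ℂ) • L).det ∧
      ((D - (ω : ℂ) • L)⁻¹ * ((ω : ℂ) • U + ((1 - ω : ℝ) : ℂ) • D)).det =
        ((1 - ω : ℝ) : ℂ) ^ n := by
  have h1 : (D - (ω : ℂ) • L).det = ∏ i, D i i := by
    rw [Matrix.det_of_lowerTriangular]
    · refine Finset.prod_congr rfl fun i _ => ?_
      simp [hL i i le_rfl]
    · intro i j hij
      have hij' : i < j := hij
      simp [hL i j hij'.le, hD hij'.ne]
  have h2 : ((ω : ℂ) • U + ((1 - ω : ℝ) : ℂ) • D).det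
      = ((1 - ω : ℝ) : ℂ) ^ n * ∏ i, D i i := by
    rw [Matrix.det_of_upperTriangular]
    · simp [hU, Finset.prod_mul_distrib]
    · intro i j hij
      have hij' : j < i := hij
      simp [hU i j hij'.le, hD hij'.ne']
  have h3 : (∏ i, D i i) ≠ 0 := Finset.prod_ne_zero_iff.mpr fun i _ => hDdiag i
  refine ⟨by rw [h1]; exact isUnit_iff_ne_zero.mpr h3, ?_⟩
  rw [Matrix.det_mul, Matrix.det_nonsing_inv, h1, h2, Ring.inverse_eq_inv']
  field_simp
end

section
/- (Kahan's necessity theorem.) Let n ≥ 1, let D, L, U be n×n complex matrices with D diagonal and every diagonal entry of D nonzero, L strictly lower triangular, and U strictly upper triangular, let ω be a nonzero real number, and let M_ω = (D − ωL)⁻¹(ωU + (1−ω)D) be the SOR iteration matrix. Then M_ω has an eigenvalue μ with ‖μ‖ ≥ |1 − ω|; consequently, if every eigenvalue of M_ω has modulus strictly less than 1 (i.e. the spectral radius of M_ω is less than 1), then 0 < ω < 2. -/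
open Matrix

lemma multiset_norm_prod_lt (c : ℝ) (s : Multiset ℂ) :
    s ≠ 0 → (∀ x ∈ s, ‖x‖ < c) → ‖s.prod‖ < c ^ s.card := by
  induction s using Multiset.induction_on with
  | empty => intro h; exact absurd rfl h
  | cons a s ih =>
    intro _ h
    have ha : ‖a‖ < c := h a (Multiset.mem_cons_self a s)
    by_cases hs : s = 0
    · subst hs
      simpa using ha
    · have h2 := ih hs (fun x hx => h x (Multiset.mem_cons_of_mem hx))
      rw [Multiset.prod_cons, Multiset.card_cons, norm_mul, pow_succ']
      exact mul_lt_mul'' ha h2 (norm_nonneg _) (norm_nonneg _)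

lemma exists_spectrum_ge (n : ℕ) (hn : 1 ≤ n) (M : Matrix (Fin n) (Fin n) ℂ) (c : ℝ)
    (hM : ‖M.det‖ = c ^ n) : ∃ μ ∈ spectrum ℂ M, c ≤ ‖μ‖ := by
  by_contra! hcon
  have hcard : M.charpoly.roots.card = n := by
    rw [← (IsAlgClosed.splits M.charpoly).natDegree_eq_card_roots,
      Matrix.charpoly_natDegree_eq_dim, Fintype.card_fin]
  have h0 : M.charpoly.roots ≠ 0 := by
    intro h
    rw [h, Multiset.card_zero] at hcard
    omega
  have := multiset_norm_prod_lt c _ h0 (fun x hx => hcon x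
    (Matrix.mem_spectrum_of_isRoot_charpoly (Polynomial.isRoot_of_mem_roots hx)))
  rw [← Matrix.det_eq_prod_roots_charpoly, hcard, hM] at this
  exact lt_irrefl _ this

/-- Kahan's necessity theorem: the SOR iteration matrix
`M_ω = (D − ωL)⁻¹(ωU + (1−ω)D)` has an eigenvalue of modulus at least `|1 − ω|`;
consequently, if all its eigenvalues have modulus less than one, then `0 < ω < 2`. -/
theorem kahan_necessity (n : ℕ) (hn : 1 ≤ n)
    (D L U : Matrix (Fin n) (Fin n) ℂ)
    (hD : D.IsDiag) (hDdiag : ∀ i, D i i ≠ 0)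
    (hL : ∀ i j : Fin n, i ≤ j → L i j = 0)
    (hU : ∀ i j : Fin n, j ≤ i → U i j = 0)
    (ω : ℝ) (hω : ω ≠ 0) :
    (∃ μ ∈ spectrum ℂ
        ((D - (ω : ℂ) • L)⁻¹ * ((ω : ℂ) • U + ((1 - ω : ℝ) : ℂ) • D)),
        |1 - ω| ≤ ‖μ‖) ∧
    ((∀ μ ∈ spectrum ℂ
        ((D - (ω : ℂ) • L)⁻¹ * ((ω : ℂ) • U + ((1 - ω : ℝ) : ℂ) • D)),
        ‖μ‖ < 1) → 0 < ω ∧ ω < 2) := by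
  have key : ∃ μ ∈ spectrum ℂ
        ((D - (ω : ℂ) • L)⁻¹ * ((ω : ℂ) • U + ((1 - ω : ℝ) : ℂ) • D)),
        |1 - ω| ≤ ‖μ‖ := by
    apply exists_spectrum_ge n hn
    have h1 : (D - (ω : ℂ) • L).det = ∏ i, D i i := by
      rw [Matrix.det_of_lowerTriangular]
      · exact Finset.prod_congr rfl (fun i _ => by simp [hL i i le_rfl])
      · intro i j hij
        have hij' : i < j := hij
        simp [hD hij'.ne, hL i j hij'.le]
    have h2 : ((ω : ℂ) • U + ((1 - ω : ℝ) : ℂ) • D).det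
        = ((1 - ω : ℝ) : ℂ) ^ n * ∏ i, D i i := by
      rw [Matrix.det_of_upperTriangular]
      · have : ∀ i ∈ Finset.univ, ((ω : ℂ) • U + ((1 - ω : ℝ) : ℂ) • D) i i
            = ((1 - ω : ℝ) : ℂ) * D i i := fun i _ => by simp [hU i i le_rfl]
        rw [Finset.prod_congr rfl this, Finset.prod_mul_distrib]
        simp
      · intro i j hij
        have hij' : j < i := hij
        simp [hD hij'.ne', hU i j hij'.le]
    have h3 : ∏ i, D i i ≠ 0 := Finset.prod_ne_zero_iff.mpr (fun i _ => hDdiag i)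
    rw [Matrix.det_mul, Matrix.det_nonsing_inv, h1, h2, Ring.inverse_eq_inv', mul_comm,
      mul_assoc, mul_inv_cancel₀ h3, mul_one, norm_pow, Complex.norm_real, Real.norm_eq_abs]
  refine ⟨key, fun h => ?_⟩
  obtain ⟨μ, hμ, hle⟩ := key
  have := abs_lt.mp (hle.trans_lt (h μ hμ))
  constructor <;> linarith [this.1, this.2]
end

section
/- (Ostrowski's sufficiency theorem.) Let n ≥ 1 and let A be an n×n real symmetric positive-definite matrix, written as A = D − L − Lᵀ where D is the diagonal part of A and L is strictly lower triangular. Then for every real ω with 0 < ω < 2, the matrix D − ωL is invertible and every complex eigenvalue μ of the SOR iteration matrix M_ω = (D − ωL)⁻¹(ωLᵀ + (1−ω)D) satisfies ‖μ‖ < 1; i.e. the spectral radius of M_ω is strictly less than 1, so the SOR method converges. -/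
open Matrix

lemma sor_aux_form {n : ℕ} (M : Matrix (Fin n) (Fin n) ℝ) (x : Fin n → ℂ) :
    star x ⬝ᵥ (M.map (algebraMap ℝ ℂ) *ᵥ x) =
      ⟨(fun i => (x i).re) ⬝ᵥ (M *ᵥ fun i => (x i).re) +
        (fun i => (x i).im) ⬝ᵥ (M *ᵥ fun i => (x i).im),
       (fun i => (x i).re) ⬝ᵥ (M *ᵥ fun i => (x i).im) -
        (fun i => (x i).im) ⬝ᵥ (M *ᵥ fun i => (x i).re)⟩ := by
  apply Complex.ext
  · simp [dotProduct, mulVec, Finset.sum_add_distrib]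
  · simp [dotProduct, mulVec, Finset.sum_add_distrib, sub_eq_add_neg]

lemma sor_aux_pos {n : ℕ} (M : Matrix (Fin n) (Fin n) ℝ) (hM : M.PosDef)
    (x : Fin n → ℂ) (hx : x ≠ 0) :
    0 < (fun i => (x i).re) ⬝ᵥ (M *ᵥ fun i => (x i).re) +
        (fun i => (x i).im) ⬝ᵥ (M *ᵥ fun i => (x i).im) := by
  have key : ∀ u : Fin n → ℝ, 0 ≤ u ⬝ᵥ (M *ᵥ u) := fun u => by
    simpa using hM.posSemidef.dotProduct_mulVec_nonneg u
  have keyp : ∀ u : Fin n → ℝ, u ≠ 0 → 0 < u ⬝ᵥ (M *ᵥ u) := fun u hu => by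
    simpa using hM.dotProduct_mulVec_pos hu
  by_cases hu : (fun i => (x i).re) = 0
  · by_cases hv : (fun i => (x i).im) = 0
    · exact absurd (funext fun i => Complex.ext (congrFun hu i) (congrFun hv i)) hx
    · exact add_pos_of_nonneg_of_pos (key _) (keyp _ hv)
  · exact add_pos_of_pos_of_nonneg (keyp _ hu) (key _)

lemma sor_aux_ineq (d r s ω : ℝ) (μ : ℂ) (hd : 0 < d) (ha : 0 < d - r - r)
    (h0 : 0 < ω) (h2 : ω < 2)
    (h : (⟨ω * r + (1 - ω) * d, -(ω * s)⟩ : ℂ) = μ * ⟨d - ω * r, -(ω * s)⟩) : ‖μ‖ < 1 := by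
  have h1 := congrArg Complex.normSq h
  rw [Complex.normSq_mul, Complex.normSq_mk, Complex.normSq_mk (d - ω * r), Complex.normSq_eq_norm_sq μ] at h1
  have hp : 0 < ω * (2 - ω) * (d * (d - r - r)) :=
    mul_pos (mul_pos h0 (by linarith)) (mul_pos hd ha)
  by_contra hc
  have hc' : 1 ≤ ‖μ‖ ^ 2 := one_le_pow₀ (not_lt.mp hc)
  have := mul_le_mul_of_nonneg_right hc'
    (add_nonneg (mul_self_nonneg (d - ω * r)) (mul_self_nonneg (-(ω * s))))
  nlinarith

/-- Ostrowski's sufficiency theorem: for a real symmetric positive-definite matrix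
`A = D − L − Lᵀ` (with `D` its diagonal part and `L` strictly lower triangular),
for every `ω ∈ (0, 2)` the matrix `D − ωL` is invertible and every complex
eigenvalue of the SOR iteration matrix `M_ω = (D − ωL)⁻¹(ωLᵀ + (1−ω)D)` has
modulus strictly less than one. -/
theorem ostrowski_sufficiency (n : ℕ) (hn : 1 ≤ n)
    (A L : Matrix (Fin n) (Fin n) ℝ)
    (hA : A.PosDef)
    (hL : ∀ i j : Fin n, i ≤ j → L i j = 0)
    (hsplit : A = Matrix.diagonal (fun i => A i i) - L - Lᵀ)
    (ω : ℝ) (hω0 : 0 < ω) (hω2 : ω < 2) :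
    IsUnit (Matrix.diagonal (fun i => A i i) - ω • L).det ∧
      ∀ μ ∈ spectrum ℂ
        (((Matrix.diagonal (fun i => A i i) - ω • L)⁻¹ *
          (ω • Lᵀ + (1 - ω) • Matrix.diagonal (fun i => A i i))).map
            (algebraMap ℝ ℂ)),
        ‖μ‖ < 1 := by
  set D : Matrix (Fin n) (Fin n) ℝ := Matrix.diagonal (fun i => A i i) with hDdef
  have hD : D.PosDef := Matrix.PosDef.diagonal fun i => hA.diag_pos
  have hdet : IsUnit (D - ω • L).det := by
    rw [Matrix.det_of_isLowerTriangular]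
    · rw [isUnit_iff_ne_zero, Finset.prod_ne_zero_iff]
      intro i _
      have : A i i ≠ 0 := (hA.diag_pos (i := i)).ne'
      simpa [hDdef, hL i i le_rfl] using this
    · intro i j hij
      have hij' : i < j := by simpa using hij
      simp [hDdef, hL i j hij'.le, Matrix.diagonal_apply_ne _ hij'.ne]
  refine ⟨hdet, fun μ hμ => ?_⟩
  rw [← Matrix.spectrum_toLin', ← Module.End.hasEigenvalue_iff_mem_spectrum] at hμ
  obtain ⟨x, hx⟩ := hμ.exists_hasEigenvector
  have hx0 := hx.2
  have hxe := hx.apply_eq_smul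
  rw [Matrix.toLin'_apply] at hxe
  have e1 : (ω • Lᵀ + (1 - ω) • D).map (algebraMap ℝ ℂ) *ᵥ x
      = μ • ((D - ω • L).map (algebraMap ℝ ℂ) *ᵥ x) := by
    rw [← Matrix.mulVec_smul, ← hxe, Matrix.mulVec_mulVec, ← Matrix.map_mul,
      Matrix.mul_nonsing_inv_cancel_left _ _ hdet]
  have e2 := congrArg (fun y => star x ⬝ᵥ y) e1
  simp only [dotProduct_smul, smul_eq_mul] at e2
  rw [sor_aux_form, sor_aux_form] at e2
  have pA := sor_aux_pos A hA x hx0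
  have pD := sor_aux_pos D hD x hx0
  rw [hsplit] at pA
  generalize (fun i => (x i).re) = u at *
  generalize (fun i => (x i).im) = v at *
  have tr : ∀ a b : Fin n → ℝ, a ⬝ᵥ (Lᵀ *ᵥ b) = b ⬝ᵥ (L *ᵥ a) := fun a b => by
    rw [Matrix.mulVec_transpose, dotProduct_comm, ← Matrix.dotProduct_mulVec]
  have dd : u ⬝ᵥ (D *ᵥ v) = v ⬝ᵥ (D *ᵥ u) := by
    simp only [hDdef, dotProduct, Matrix.mulVec_diagonal]
    exact Finset.sum_congr rfl fun i _ => by ring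
  simp only [Matrix.add_mulVec, Matrix.sub_mulVec, Matrix.smul_mulVec, dotProduct_add,
    dotProduct_sub, dotProduct_smul, smul_eq_mul, tr, dd] at e2 pA
  refine sor_aux_ineq (u ⬝ᵥ (D *ᵥ u) + v ⬝ᵥ (D *ᵥ v)) (u ⬝ᵥ (L *ᵥ u) + v ⬝ᵥ (L *ᵥ v))
    (u ⬝ᵥ (L *ᵥ v) - v ⬝ᵥ (L *ᵥ u)) ω μ pD (by linarith) hω0 hω2 ?_
  convert e2 using 2
  · ring
  · ring
  · congr 1 <;> ring
end
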